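/- Let X be a topological space and let Y be a closed subspace of X. If player TWO has a winning strategy in the game G^ω_d(𝒪,𝒪) played on the space X, then TWO has a winning strategy in the game G^ω_d(𝒪,𝒪) played on the space Y. -/

import Mathlib

namespace SSG

/-- A family of subsets of a topological space is *discrete* if every point has a
neighborhood meeting at most one member of the family. -/
def IsDiscreteFam {X : Type*} [TopologicalSpace X] (𝒜 : Set (Set X)) : Prop :=
  ∀ x : X, ∃ U ∈ nhds x, {A | A ∈ 𝒜 ∧ (A ∩ U).Nonempty}.Subsingleton

/-- A family of open subsets covering the whole space. -/
def IsOpenCover {X : Type*} [TopologicalSpace X] (𝒰 : Set (Set X)) : Prop :=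
  (∀ U ∈ 𝒰, IsOpen U) ∧ ⋃₀ 𝒰 = Set.univ

/-- A legal move of TWO in the selective strong screenability game, in response to the
open cover `𝒰` played by ONE: a discrete family of open sets, each contained in some
member of `𝒰`. -/
def LegalTwoMove {X : Type*} [TopologicalSpace X] (𝒰 𝒱 : Set (Set X)) : Prop :=
  IsDiscreteFam 𝒱 ∧ ∀ V ∈ 𝒱, IsOpen V ∧ ∃ U ∈ 𝒰, V ⊆ U

/-- ONE has a winning strategy in the game `G^ω_d(𝒪, 𝒪_Y)` on `X`:
there is a strategy `σ` (a function from finite histories of TWO's moves to open covers)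
such that for every play in which TWO moves legally, the union of TWO's families fails
to cover `Y`. -/
def OneWinsGomega (X : Type*) [TopologicalSpace X] (Y : Set X) : Prop :=
  ∃ σ : List (Set (Set X)) → Set (Set X),
    (∀ h : List (Set (Set X)), IsOpenCover (σ h)) ∧
    ∀ V : ℕ → Set (Set X),
      (∀ n : ℕ, LegalTwoMove (σ (List.ofFn fun i : Fin n => V i)) (V n)) →
      ¬ Y ⊆ ⋃ n : ℕ, ⋃₀ V n

/-- TWO has a winning strategy in the game `G^ω_d(𝒪, 𝒪_Y)` on `X`:
a strategy `τ` (from finite histories of ONE's moves, including the current inning's move,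
to TWO's responses) such that against any sequence of open covers played by ONE, all of
TWO's responses are legal and their union covers `Y`. -/
def TwoWinsGomega (X : Type*) [TopologicalSpace X] (Y : Set X) : Prop :=
  ∃ τ : List (Set (Set X)) → Set (Set X),
    ∀ U : ℕ → Set (Set X), (∀ n : ℕ, IsOpenCover (U n)) →
      (∀ n : ℕ, LegalTwoMove (U n) (τ (List.ofFn fun i : Fin (n+1) => U i))) ∧
      Y ⊆ ⋃ n : ℕ, ⋃₀ τ (List.ofFn fun i : Fin (n+1) => U i)

/-- TWO has a winning strategy in the one-inning game `G^1_d(𝒪, 𝒪_Y)` on `X`: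
every open cover of `X` admits a discrete family of open sets, each contained in some
member of the cover, whose union contains `Y`. -/
def TwoWinsGone (X : Type*) [TopologicalSpace X] (Y : Set X) : Prop :=
  ∀ 𝒰 : Set (Set X), IsOpenCover 𝒰 →
    ∃ 𝒱 : Set (Set X), LegalTwoMove 𝒰 𝒱 ∧ Y ⊆ ⋃₀ 𝒱

/-- ONE has a winning strategy in the Banach–Mazur game `MB(Y,X)`: a strategy `σ`
(from finite histories of TWO's moves to ONE's next move) which always produces a legal
move (a nonempty open set contained in TWO's last move) whenever TWO has moved legally
so far, and such that for every play in which TWO moves legally,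
`Y ∩ ⋂ₙ Oₙ` is nonempty. -/
def OneWinsMB (X : Type*) [TopologicalSpace X] (Y : Set X) : Prop :=
  ∃ σ : List (Set X) → Set X,
    (∀ T : ℕ → Set X, ∀ n : ℕ,
      (∀ k : ℕ, k < n → IsOpen (T k) ∧ (T k).Nonempty ∧
          T k ⊆ σ (List.ofFn fun i : Fin k => T i)) →
      IsOpen (σ (List.ofFn fun i : Fin n => T i)) ∧
      (σ (List.ofFn fun i : Fin n => T i)).Nonempty ∧
      ∀ k : ℕ, n = k + 1 → σ (List.ofFn fun i : Fin n => T i) ⊆ T k) ∧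
    ∀ T : ℕ → Set X,
      (∀ n : ℕ, IsOpen (T n) ∧ (T n).Nonempty ∧
          T n ⊆ σ (List.ofFn fun i : Fin n => T i)) →
      (Y ∩ ⋂ n : ℕ, σ (List.ofFn fun i : Fin n => T i)).Nonempty

/-- TWO has a winning strategy in the Banach–Mazur game `MB(Y,X)`: a strategy `τ`
(from finite histories of ONE's moves to TWO's next move) which always produces a legal
move (a nonempty open subset of ONE's last move) whenever ONE has moved legally
so far, and such that for every play in which ONE moves legally,
`Y ∩ ⋂ₙ Oₙ` is empty. -/
def TwoWinsMB (X : Type*) [TopologicalSpace X] (Y : Set X) : Prop :=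
  ∃ τ : List (Set X) → Set X,
    (∀ O : ℕ → Set X, ∀ n : ℕ,
      (∀ k : ℕ, k ≤ n → IsOpen (O k) ∧ (O k).Nonempty ∧
          ∀ j : ℕ, k = j + 1 → O k ⊆ τ (List.ofFn fun i : Fin (j+1) => O i)) →
      IsOpen (τ (List.ofFn fun i : Fin (n+1) => O i)) ∧
      (τ (List.ofFn fun i : Fin (n+1) => O i)).Nonempty ∧
      τ (List.ofFn fun i : Fin (n+1) => O i) ⊆ O n) ∧
    ∀ O : ℕ → Set X,
      (∀ n : ℕ, IsOpen (O n) ∧ (O n).Nonempty ∧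
          ∀ j : ℕ, n = j + 1 → O n ⊆ τ (List.ofFn fun i : Fin (j+1) => O i)) →
      Y ∩ ⋂ n : ℕ, O n = ∅

/-- A space is ultraparacompact if every open cover has a refinement by pairwise
disjoint open sets still covering the space. -/
def Ultraparacompact (X : Type*) [TopologicalSpace X] : Prop :=
  ∀ 𝒰 : Set (Set X), IsOpenCover 𝒰 →
    ∃ 𝒱 : Set (Set X), (∀ V ∈ 𝒱, IsOpen V ∧ ∃ U ∈ 𝒰, V ⊆ U) ∧
      𝒱.Pairwise Disjoint ∧ ⋃₀ 𝒱 = Set.univ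

/-- A space is zero-dimensional if every point has a neighborhood basis of clopen sets. -/
def ZeroDimensional (X : Type*) [TopologicalSpace X] : Prop :=
  ∀ (x : X) (U : Set X), IsOpen U → x ∈ U → ∃ V : Set X, IsClopen V ∧ x ∈ V ∧ V ⊆ U

/-- A space is strongly zero-dimensional if every *finite* open cover has a refinement
by pairwise disjoint open sets still covering the space. -/
def StronglyZeroDim (X : Type*) [TopologicalSpace X] : Prop :=
  ∀ 𝒰 : Set (Set X), 𝒰.Finite → IsOpenCover 𝒰 →
    ∃ 𝒱 : Set (Set X), (∀ V ∈ 𝒱, IsOpen V ∧ ∃ U ∈ 𝒰, V ⊆ U) ∧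
      𝒱.Pairwise Disjoint ∧ ⋃₀ 𝒱 = Set.univ

/-- `X` has a π-base consisting of nontrivial connected (open) sets. -/
def HasConnectedPiBase (X : Type*) [TopologicalSpace X] : Prop :=
  ∃ P : Set (Set X), (∀ B ∈ P, IsOpen B ∧ IsConnected B ∧ B.Nontrivial) ∧
    ∀ U : Set X, IsOpen U → U.Nonempty → ∃ B ∈ P, B ⊆ U

/-!
TWO plays on the closed subspace by imagining a play on the ambient space. Each cover of the
subspace is enlarged to a cover of the ambient space by extending its members to open sets and
adding the open complement of the subspace; TWO's winning reply to the enlarged cover is then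
intersected with the subspace. Members inside the complement leave an empty trace, so discarding
empty traces leaves a legal reply, and points of the subspace stay covered.
-/

section

open Set Topology

variable {X Z : Type*} {f : Z → X}

/-- The open sets of `X` that extend a member of the family `𝒰` of subsets of `Z` along `f`,
together with those missing the range of `f`: the cover of `X` to be played in place of the cover
`𝒰` of `Z`. -/
def openExtensions [TopologicalSpace X] (f : Z → X) (𝒰 : Set (Set Z)) : Set (Set X) :=
  {W | IsOpen W ∧ f ⁻¹' W ∈ insert ∅ 𝒰}

/-- The trace on `Z`, along `f`, of a family of subsets of `X`. Empty preimages are discarded: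
they would not refine the empty cover, which ONE may play when `Z` is empty. -/
def traceFam (f : Z → X) (𝒱 : Set (Set X)) : Set (Set Z) :=
  preimage f '' 𝒱 \ {∅}

theorem sUnion_traceFam (𝒱 : Set (Set X)) : ⋃₀ traceFam f 𝒱 = f ⁻¹' ⋃₀ 𝒱 := by
  rw [traceFam, sUnion_sdiff_singleton_empty, sUnion_image, preimage_sUnion]

variable [TopologicalSpace X] [TopologicalSpace Z]

theorem IsDiscreteFam.mono {𝒜 ℬ : Set (Set X)} (hℬ : IsDiscreteFam ℬ) (h : 𝒜 ⊆ ℬ) :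
    IsDiscreteFam 𝒜 := fun x ↦
  let ⟨N, hN, hsub⟩ := hℬ x
  ⟨N, hN, hsub.anti fun _ hA ↦ ⟨h hA.1, hA.2⟩⟩

theorem IsDiscreteFam.image_preimage {𝒜 : Set (Set X)} (h𝒜 : IsDiscreteFam 𝒜)
    (hf : Continuous f) : IsDiscreteFam (preimage f '' 𝒜) := by
  intro z
  obtain ⟨N, hN, hsub⟩ := h𝒜 (f z)
  refine ⟨f ⁻¹' N, hf.continuousAt hN, ?_⟩
  rintro _ ⟨⟨A, hA, rfl⟩, a, haA, haN⟩ _ ⟨⟨B, hB, rfl⟩, b, hbB, hbN⟩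
  rw [hsub ⟨hA, f a, haA, haN⟩ ⟨hB, f b, hbB, hbN⟩]

theorem IsOpenCover.openExtensions {𝒰 : Set (Set Z)} (h𝒰 : IsOpenCover 𝒰) (hf : IsInducing f)
    (hrange : IsClosed (range f)) : IsOpenCover (openExtensions f 𝒰) := by
  refine ⟨fun W hW ↦ hW.1, sUnion_eq_univ_iff.2 fun x ↦ ?_⟩
  by_cases hx : x ∈ range f
  · obtain ⟨z, rfl⟩ := hx
    obtain ⟨U, hU, hzU⟩ := sUnion_eq_univ_iff.1 h𝒰.2 z
    obtain ⟨W, hW, rfl⟩ := hf.isOpen_iff.1 (h𝒰.1 U hU)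
    exact ⟨W, ⟨hW, mem_insert_of_mem _ hU⟩, hzU⟩
  · exact ⟨(range f)ᶜ, ⟨hrange.isOpen_compl, by simp⟩, hx⟩

theorem LegalTwoMove.traceFam {𝒰 : Set (Set Z)} {𝒱 : Set (Set X)}
    (h𝒱 : LegalTwoMove (openExtensions f 𝒰) 𝒱) (hf : Continuous f) :
    LegalTwoMove 𝒰 (traceFam f 𝒱) := by
  refine ⟨(h𝒱.1.image_preimage hf).mono sdiff_subset, ?_⟩
  rintro _ ⟨⟨V, hV, rfl⟩, hne⟩
  obtain ⟨hVopen, W, ⟨_, hW⟩, hVW⟩ := h𝒱.2 V hV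
  have hsub : f ⁻¹' V ⊆ f ⁻¹' W := preimage_mono hVW
  have hW_ne : f ⁻¹' W ≠ ∅ := fun hempty ↦ hne (subset_eq_empty hsub hempty)
  exact ⟨hVopen.preimage hf, f ⁻¹' W, hW.resolve_left hW_ne, hsub⟩

theorem TwoWinsGomega.transfer {A : Set X} {B : Set Z} (h : TwoWinsGomega X A)
    (E : Set (Set Z) → Set (Set X)) (R : Set (Set X) → Set (Set Z))
    (hE : ∀ 𝒰, IsOpenCover 𝒰 → IsOpenCover (E 𝒰))
    (hR : ∀ 𝒰 𝒱, LegalTwoMove (E 𝒰) 𝒱 → LegalTwoMove 𝒰 (R 𝒱))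
    (hcover : ∀ 𝒱 : ℕ → Set (Set X), A ⊆ ⋃ n, ⋃₀ 𝒱 n → B ⊆ ⋃ n, ⋃₀ R (𝒱 n)) :
    TwoWinsGomega Z B := by
  obtain ⟨τ, hτ⟩ := h
  refine ⟨fun history ↦ R (τ (history.map E)), fun U hU ↦ ?_⟩
  obtain ⟨hlegal, hwin⟩ := hτ (fun n ↦ E (U n)) fun n ↦ hE _ (hU n)
  simp only [List.map_ofFn]
  exact ⟨fun n ↦ hR _ _ (hlegal n), hcover _ hwin⟩

theorem statement19_general {A : Set X} (hf : IsInducing f) (hrange : IsClosed (range f))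
    (h : TwoWinsGomega X A) : TwoWinsGomega Z (f ⁻¹' A) := by
  refine h.transfer (openExtensions f) (traceFam f) (fun _ h𝒰 ↦ h𝒰.openExtensions hf hrange)
    (fun _ _ h𝒱 ↦ h𝒱.traceFam hf.continuous) fun 𝒱 hA ↦ ?_
  simpa only [sUnion_traceFam, preimage_iUnion] using preimage_mono (f := f) hA

end

/-- If `Y` is a closed subspace of `X` and TWO has a winning strategy in
`G^ω_d(𝒪,𝒪)` on `X`, then TWO has a winning strategy in `G^ω_d(𝒪,𝒪)` on `Y`. -/
theorem statement19 {X : Type*} [TopologicalSpace X] (Y : Set X) (hY : IsClosed Y)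
    (h : TwoWinsGomega X Set.univ) :
    TwoWinsGomega ↥Y Set.univ := by
  exact statement19_general .subtypeVal (by rwa [Subtype.range_coe]) h

end SSG
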